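/- For every integer k ≥ 0, the subspace ψ(H_{k+1}) of ℝ[x₁,…,xₙ]ⁿ is irreducible under the o(n,ℝ)-action: it is invariant under all the operators L_{r,s} (1 ≤ r < s ≤ n), and its only L_{r,s}-invariant ℝ-subspaces are {0} and ψ(H_{k+1}) itself. -/

import Mathlib

open MvPolynomial

/-- The Laplacian `Δ = ∑ᵣ ∂²_{xᵣ}` on `ℝ[x₁,…,xₙ]`. -/
noncomputable def lap {n : ℕ} (p : MvPolynomial (Fin n) ℝ) : MvPolynomial (Fin n) ℝ :=
  ∑ r : Fin n, pderiv r (pderiv r p)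

/-- The gradient map `ψ(f) = (∂_{x₁}f,…,∂_{xₙ}f)`. -/
noncomputable def gradPsi {n : ℕ} (f : MvPolynomial (Fin n) ℝ) :
    Fin n → MvPolynomial (Fin n) ℝ :=
  fun j => pderiv j f

/-- The set `ψ(H_{k+1})`. -/
def psiH (n k : ℕ) : Set (Fin n → MvPolynomial (Fin n) ℝ) :=
  {v | ∃ f : MvPolynomial (Fin n) ℝ,
    f.IsHomogeneous (k + 1) ∧ lap f = 0 ∧ v = gradPsi f}

/-- The `o(n,ℝ)`-action on tuples:
`L_{r,s}(u) = (x_r∂_{x_s} − x_s∂_{x_r})(u) + u_s ς_r − u_r ς_s`. -/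
noncomputable def Lop {n : ℕ} (r s : Fin n) (u : Fin n → MvPolynomial (Fin n) ℝ) :
    Fin n → MvPolynomial (Fin n) ℝ :=
  fun j => (X r * pderiv s (u j) - X s * pderiv r (u j))
    + (if j = r then u s else 0) - (if j = s then u r else 0)

/-- Partial derivatives of polynomials commute. -/
theorem pderiv_pderiv_comm {σ R : Type*} [CommRing R] (i j : σ) (p : MvPolynomial σ R) :
    pderiv i (pderiv j p) = pderiv j (pderiv i p) := by
  classical
  have h : ⁅pderiv (R := R) i, pderiv (R := R) j⁆ = 0 := by
    refine derivation_ext fun l => ?_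
    rw [Derivation.commutator_apply, pderiv_X, pderiv_X]
    by_cases hi : l = i <;> by_cases hj : l = j <;> simp [Pi.single_apply, hi, hj] <;>
      split_ifs <;> simp
  have := DFunLike.congr_fun h p
  rwa [Derivation.commutator_apply, Derivation.zero_apply, sub_eq_zero] at this

section Rotation

variable {n : ℕ}

/-- The infinitesimal rotation `x_r ∂_{x_s} − x_s ∂_{x_r}`. -/
noncomputable def rot (r s : Fin n) (f : MvPolynomial (Fin n) ℝ) : MvPolynomial (Fin n) ℝ :=
  X r * pderiv s f - X s * pderiv r f

theorem rot_self (r : Fin n) (f : MvPolynomial (Fin n) ℝ) : rot r r f = 0 := sub_self _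

theorem rot_swap (r s : Fin n) (f : MvPolynomial (Fin n) ℝ) : rot s r f = -rot r s f := by
  simp [rot]

theorem rot_add (r s : Fin n) (f g : MvPolynomial (Fin n) ℝ) :
    rot r s (f + g) = rot r s f + rot r s g := by
  simp only [rot, map_add]; ring

theorem rot_smul (r s : Fin n) (c : ℝ) (f : MvPolynomial (Fin n) ℝ) :
    rot r s (c • f) = c • rot r s f := by
  simp only [rot, Derivation.map_smul, mul_smul_comm, smul_sub]

theorem pderiv_rot (j r s : Fin n) (f : MvPolynomial (Fin n) ℝ) :
    pderiv j (rot r s f) = rot r s (pderiv j f)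
      + (if j = r then pderiv s f else 0) - (if j = s then pderiv r f else 0) := by
  simp only [rot, map_sub, pderiv_mul, pderiv_X, Pi.single_apply, pderiv_pderiv_comm j,
    @eq_comm _ j]
  split_ifs <;> ring

theorem gradPsi_rot (r s : Fin n) (f : MvPolynomial (Fin n) ℝ) :
    gradPsi (rot r s f) = Lop r s (gradPsi f) :=
  funext fun j => pderiv_rot j r s f

theorem MvPolynomial.IsHomogeneous.rot {f : MvPolynomial (Fin n) ℝ} {m : ℕ}
    (hf : f.IsHomogeneous m) (r s : Fin n) : (rot r s f).IsHomogeneous m := by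
  cases m with
  | zero =>
    rw [← totalDegree_zero_iff_isHomogeneous, totalDegree_eq_zero_iff_eq_C] at hf
    rw [hf]
    simpa [_root_.rot] using isHomogeneous_zero _ _ _
  | succ m =>
    have h (i j : Fin n) : (X i * pderiv j f).IsHomogeneous (m + 1) := by
      simpa [add_comm] using (isHomogeneous_X ℝ i).mul (hf.pderiv (i := j))
    exact (h r s).sub (h s r)

theorem lap_pderiv (j : Fin n) (f : MvPolynomial (Fin n) ℝ) :
    lap (pderiv j f) = pderiv j (lap f) := by
  simp only [lap, map_sum, pderiv_pderiv_comm j]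

theorem lap_rot (r s : Fin n) (f : MvPolynomial (Fin n) ℝ) :
    lap (rot r s f) = rot r s (lap f) := by
  have h (i j : Fin n) :
      lap (X i * pderiv j f) = 2 * pderiv i (pderiv j f) + X i * pderiv j (lap f) := by
    have key (l : Fin n) : pderiv l (pderiv l (X i * pderiv j f)) =
        (if i = l then 2 * pderiv l (pderiv j f) else 0)
          + X i * pderiv l (pderiv l (pderiv j f)) := by
      simp only [pderiv_mul, map_add, pderiv_X, Pi.single_apply]
      split_ifs
      · simp
        ring
      · simp
    rw [← lap_pderiv]
    simp only [lap, key, Finset.sum_add_distrib, Finset.mul_sum, Finset.sum_ite_eq,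
      Finset.mem_univ, if_true]
  have lap_sub (p q : MvPolynomial (Fin n) ℝ) : lap (p - q) = lap p - lap q := by
    simp [lap]
  rw [rot, lap_sub, h, h, pderiv_pderiv_comm, rot]
  ring

/-- The space of harmonic homogeneous polynomials of degree `m`. -/
noncomputable def harmonicSubmodule (n m : ℕ) : Submodule ℝ (MvPolynomial (Fin n) ℝ) where
  carrier := {f | f.IsHomogeneous m ∧ lap f = 0}
  zero_mem' := ⟨isHomogeneous_zero _ _ _, by simp [lap]⟩
  add_mem' := by
    rintro f g ⟨hf, hf'⟩ ⟨hg, hg'⟩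
    refine ⟨hf.add hg, ?_⟩
    simp only [lap, map_add, Finset.sum_add_distrib] at *
    rw [hf', hg', add_zero]
  smul_mem' := by
    rintro c f ⟨hf, hf'⟩
    refine ⟨(homogeneousSubmodule (Fin n) ℝ m).smul_mem c hf, ?_⟩
    simp only [lap, Derivation.map_smul, ← Finset.smul_sum] at *
    rw [hf', smul_zero]

theorem rot_mem_harmonicSubmodule {m : ℕ} {f : MvPolynomial (Fin n) ℝ}
    (hf : f ∈ harmonicSubmodule n m) (r s : Fin n) : rot r s f ∈ harmonicSubmodule n m :=
  ⟨hf.1.rot r s, by rw [lap_rot, hf.2]; simp [rot]⟩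

theorem pderiv_mem_harmonicSubmodule {m : ℕ} {f : MvPolynomial (Fin n) ℝ}
    (hf : f ∈ harmonicSubmodule n (m + 1)) (j : Fin n) :
    pderiv j f ∈ harmonicSubmodule n m :=
  ⟨hf.1.pderiv, by rw [lap_pderiv, hf.2, map_zero]⟩

/-- On a harmonic polynomial of positive degree, a quadratic expression in the rotations computes
the multiple `(n + 2m - 2) x_i ∂_j f - |x|² ∂_i ∂_j f` of the harmonic part of `x_i ∂_j f`. -/
theorem sum_rot_rot {m : ℕ} {f : MvPolynomial (Fin n) ℝ}
    (hf : f ∈ harmonicSubmodule n (m + 1)) (i j : Fin n) :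
    ∑ l, rot i l (rot l j f) + (m : ℝ) • rot i j f
        - (if i = j then (m + 1 : ℝ) else 0) • f
      = ((n : ℝ) + 2 * m - 2) • (X i * pderiv j f)
        - (∑ l, X l * X l) * pderiv i (pderiv j f) := by
  have euler := hf.1.sum_X_mul_pderiv
  have euler_pderiv (t : Fin n) : ∑ l, X l * pderiv l (pderiv t f) = m • pderiv t f :=
    (hf.1.pderiv (i := t)).sum_X_mul_pderiv
  have harm : ∑ l, pderiv l (pderiv l f) = 0 := hf.2
  have key (l : Fin n) : rot i l (rot l j f) =
      X i * pderiv j f + X i * (X l * pderiv l (pderiv j f))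
        - (if l = j then X i * pderiv l f else 0) - X i * X j * pderiv l (pderiv l f)
        - (if i = l then X l * pderiv j f else 0) - (X l * X l) * pderiv i (pderiv j f)
        + (if i = j then X l * pderiv l f else 0) + X j * (X l * pderiv l (pderiv i f)) := by
    conv_lhs => rw [rot, pderiv_rot, pderiv_rot, rot, rot, pderiv_pderiv_comm j l,
      pderiv_pderiv_comm j i]
    split_ifs <;> simp_all <;> ring
  simp only [key, Finset.sum_add_distrib, Finset.sum_sub_distrib, ← Finset.mul_sum,
    Finset.sum_ite_eq, Finset.sum_ite_eq', Finset.mem_univ, if_true, euler_pderiv, harm,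
    Finset.sum_const, Finset.card_univ, Fintype.card_fin, ← Finset.sum_mul]
  have hite : ∑ l, (if i = j then X l * pderiv l f else 0)
      = if i = j then (m + 1) • f else 0 := by
    split_ifs <;> simp [euler]
  rw [hite, rot]
  simp only [smul_eq_C_mul, nsmul_eq_mul]
  have hC : (C 2 : MvPolynomial (Fin n) ℝ) = 2 := map_ofNat C 2
  split_ifs <;> simp [hC] <;> ring

/-- A nonzero space of harmonic homogeneous polynomials stable under infinitesimal rotations is the
whole space of harmonic homogeneous polynomials. -/
theorem harmonicSubmodule_le_of_rot_mem (hn : 3 ≤ n) (m : ℕ)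
    (V : Submodule ℝ (MvPolynomial (Fin n) ℝ)) (hV : V ≤ harmonicSubmodule n m)
    (hrot : ∀ r s, ∀ f ∈ V, rot r s f ∈ V) (hne : V ≠ ⊥) : harmonicSubmodule n m ≤ V := by
  induction m generalizing V with
  | zero =>
    obtain ⟨f, hf, hf0⟩ := V.exists_mem_ne_zero_of_ne_bot hne
    have const {g : MvPolynomial (Fin n) ℝ} (hg : g ∈ harmonicSubmodule n 0) :
        g = C (coeff 0 g) :=
      totalDegree_eq_zero_iff_eq_C.1 ((totalDegree_zero_iff_isHomogeneous _).2 hg.1)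
    intro g hg
    have hfc : coeff 0 f ≠ 0 := fun h => hf0 (by rw [const (hV hf), h, C_0])
    have : g = (coeff 0 g / coeff 0 f) • f := by
      rw [const hg, const (hV hf), smul_eq_C_mul, ← C_mul]
      simp [hfc]
    rw [this]
    exact V.smul_mem _ hf
  | succ m ih =>
    let D : Submodule ℝ (MvPolynomial (Fin n) ℝ) :=
      Submodule.span ℝ {g | ∃ f ∈ V, ∃ j, g = pderiv j f}
    have pderiv_mem {f} (hf : f ∈ V) (j : Fin n) : pderiv j f ∈ D :=
      Submodule.subset_span ⟨f, hf, j, rfl⟩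
    have hD : D ≤ harmonicSubmodule n m := by
      refine Submodule.span_le.2 ?_
      rintro _ ⟨f, hf, j, rfl⟩
      exact pderiv_mem_harmonicSubmodule (hV hf) j
    have hDrot : ∀ r s, ∀ g ∈ D, rot r s g ∈ D := by
      intro r s g hg
      induction hg using Submodule.span_induction with
      | mem g hg =>
        obtain ⟨f, hf, j, rfl⟩ := hg
        have : rot r s (pderiv j f) = pderiv j (rot r s f)
            - (if j = r then pderiv s f else 0) + (if j = s then pderiv r f else 0) := by
          rw [pderiv_rot]; ring
        rw [this]
        refine D.add_mem (D.sub_mem (pderiv_mem (hrot r s f hf) j) ?_) ?_ <;> split_ifs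
        exacts [pderiv_mem hf s, D.zero_mem, pderiv_mem hf r, D.zero_mem]
      | zero => simp [rot]
      | add f g _ _ hf hg => rw [rot_add]; exact D.add_mem hf hg
      | smul c f _ hf => rw [rot_smul]; exact D.smul_mem c hf
    have hDne : D ≠ ⊥ := by
      obtain ⟨f, hf, hf0⟩ := V.exists_mem_ne_zero_of_ne_bot hne
      intro hbot
      have euler := (hV hf).1.sum_X_mul_pderiv
      have hz (j : Fin n) : pderiv j f = 0 := by
        have := pderiv_mem hf j
        rwa [hbot, Submodule.mem_bot] at this
      simp only [hz, mul_zero, Finset.sum_const_zero] at euler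
      exact hf0 ((smul_eq_zero.1 euler.symm).resolve_left m.succ_ne_zero)
    have raise (i : Fin n) : ∀ g ∈ D, ((n : ℝ) + 2 * m - 2) • (X i * g)
        - (∑ l, X l * X l) * pderiv i g ∈ V := by
      intro g hg
      induction hg using Submodule.span_induction with
      | mem g hg =>
        obtain ⟨f, hf, j, rfl⟩ := hg
        rw [← sum_rot_rot (hV hf)]
        exact V.sub_mem (V.add_mem (V.sum_mem fun l _ => hrot _ _ _ (hrot _ _ _ hf))
          (V.smul_mem _ (hrot _ _ _ hf))) (V.smul_mem _ hf)
      | zero => simp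
      | add f g _ _ hf hg =>
        convert V.add_mem hf hg using 1
        simp only [map_add, mul_add, smul_add]
        ring
      | smul c f _ hf =>
        convert V.smul_mem c hf using 1
        rw [Derivation.map_smul, mul_smul_comm, mul_smul_comm, smul_sub, smul_comm]
    intro h hh
    have hsum := V.sum_mem (t := Finset.univ) fun i _ =>
      raise i _ (ih D hD hDrot hDne (pderiv_mem_harmonicSubmodule hh i))
    have harm : ∑ l, pderiv l (pderiv l h) = 0 := hh.2
    rw [Finset.sum_sub_distrib, ← Finset.smul_sum, ← Finset.mul_sum, harm, mul_zero, sub_zero,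
      hh.1.sum_X_mul_pderiv, ← Nat.cast_smul_eq_nsmul ℝ, smul_smul] at hsum
    refine (V.smul_mem_iff ?_).1 hsum
    have : (3 : ℝ) ≤ n := by exact_mod_cast hn
    have : (0 : ℝ) ≤ m := m.cast_nonneg
    exact mul_ne_zero (by linarith) (by positivity)

end Rotation

/-- `ψ(H_{k+1})` is invariant under all `L_{r,s}` and is irreducible:
its only `L_{r,s}`-invariant ℝ-subspaces are `{0}` and itself. -/
theorem psiH_irreducible (n : ℕ) (hn : 3 ≤ n) (k : ℕ) :
    (∀ r s : Fin n, r < s → ∀ u ∈ psiH n k, Lop r s u ∈ psiH n k) ∧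
    (∀ W : Submodule ℝ (Fin n → MvPolynomial (Fin n) ℝ),
      (W : Set (Fin n → MvPolynomial (Fin n) ℝ)) ⊆ psiH n k →
      (∀ r s : Fin n, r < s → ∀ u ∈ W, Lop r s u ∈ W) →
      (W : Set (Fin n → MvPolynomial (Fin n) ℝ)) = {0} ∨
        (W : Set (Fin n → MvPolynomial (Fin n) ℝ)) = psiH n k) := by
  refine ⟨?_, fun W hW hL => ?_⟩
  · rintro r s - _ ⟨f, hf, hf', rfl⟩
    obtain ⟨h, h'⟩ := rot_mem_harmonicSubmodule (m := k + 1) ⟨hf, hf'⟩ r s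
    exact ⟨_, h, h', (gradPsi_rot r s f).symm⟩
  · let grad : MvPolynomial (Fin n) ℝ →ₗ[ℝ] (Fin n → MvPolynomial (Fin n) ℝ) :=
      LinearMap.pi fun j => (pderiv j).toLinearMap
    let V : Submodule ℝ (MvPolynomial (Fin n) ℝ) :=
      harmonicSubmodule n (k + 1) ⊓ W.comap grad
    have hlt {r s : Fin n} (hrs : r < s) {f} (hf : f ∈ V) : rot r s f ∈ V := by
      refine ⟨rot_mem_harmonicSubmodule hf.1 r s, ?_⟩
      change gradPsi (rot r s f) ∈ W
      rw [gradPsi_rot]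
      exact hL r s hrs _ hf.2
    have hrot : ∀ r s, ∀ f ∈ V, rot r s f ∈ V := by
      intro r s f hf
      rcases lt_trichotomy r s with h | rfl | h
      · exact hlt h hf
      · rw [rot_self]; exact V.zero_mem
      · rw [rot_swap]; exact V.neg_mem (hlt h hf)
    by_cases hbot : V = ⊥
    · left
      refine Set.Subset.antisymm (fun u hu => ?_) (Set.singleton_subset_iff.2 W.zero_mem)
      obtain ⟨f, hf, hf', rfl⟩ := hW hu
      have hfV : f ∈ V := ⟨⟨hf, hf'⟩, hu⟩
      rw [hbot, Submodule.mem_bot] at hfV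
      exact hfV ▸ map_zero grad
    · right
      refine hW.antisymm ?_
      rintro _ ⟨f, hf, hf', rfl⟩
      exact (harmonicSubmodule_le_of_rot_mem hn (k + 1) V inf_le_left hrot hbot ⟨hf, hf'⟩).2
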